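/- For every L ≥ 1, the numbers m_L and the moments M_k satisfy the inversion formula m_L = M_L − Σ_{s=0}^{L−1} C(L,s) · M_s, where C(L,s) is the binomial coefficient. -/

import Mathlib

open Filter

/-- The generations of the Calkin–Wilf tree: `CW 0 = [1/1]` is the first
generation, and each generation is obtained from the previous one by replacing
each entry `x` by `x/(x+1)` and `x+1`, in this order.  Thus the `n`-th
generation of the paper is `CW (n-1)`. -/
def CW : ℕ → List ℚ
  | 0 => [1]
  | n + 1 => (CW n).flatMap (fun x => [x / (x + 1), x + 1])

open scoped Classical in
/-- `Fcw n` is the distribution function of the `(n+1)`-st generation of the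
Calkin–Wilf tree: `Fcw (n-1) x = F_n(x) = 2^(1-n) · #{j : x_j^(n) ≤ x}`. -/
noncomputable def Fcw (n : ℕ) (x : ℝ) : ℝ :=
  ((CW n).countP (fun q => decide ((q : ℝ) ≤ x))) / 2 ^ n

open MeasureTheory


theorem cw_pos (n : ℕ) : ∀ q ∈ CW n, 0 < q := by
  induction n with
  | zero => simp [CW]
  | succ n ih =>
    intro q hq
    simp only [CW, List.mem_flatMap, List.mem_cons, List.not_mem_nil, or_false] at hq
    obtain ⟨a, ha, rfl | rfl⟩ := hq
    · have := ih a ha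
      positivity
    · have := ih a ha
      positivity

theorem cw_length (n : ℕ) : (CW n).length = 2 ^ n := by
  induction n with
  | zero => simp [CW]
  | succ n ih => simp [CW, List.length_flatMap, ih, pow_succ]

open scoped Classical in
theorem cw_count_ge (x : ℝ) (hx : 1 ≤ x) (l : List ℚ) (hl : ∀ q ∈ l, 0 < q) :
    (l.flatMap (fun x : ℚ => [x / (x + 1), x + 1])).countP (fun q : ℚ => decide ((q : ℝ) ≤ x))
      = l.length + l.countP (fun q : ℚ => decide ((q : ℝ) ≤ x - 1)) := by
  induction l with
  | nil => simp
  | cons a l ih =>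
    have ha : (0 : ℝ) < a := by exact_mod_cast hl a (by simp)
    have h1 : (a : ℝ) / (a + 1) ≤ x := by
      rw [div_le_iff₀ (by positivity)]
      nlinarith
    have h2 : ((a : ℝ) + 1 ≤ x) ↔ ((a : ℝ) ≤ x - 1) := by
      constructor <;> intro h <;> linarith
    have := ih (fun q hq => hl q (by simp [hq]))
    rw [List.flatMap_cons, List.countP_append, this]
    simp only [List.countP_cons, List.countP_nil, List.length_cons, decide_eq_true_eq]
    push_cast
    simp only [h1, h2, if_true]
    ring

open scoped Classical in
theorem cw_count_lt (x : ℝ) (hx : x < 1) (l : List ℚ) (hl : ∀ q ∈ l, 0 < q) :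
    (l.flatMap (fun x : ℚ => [x / (x + 1), x + 1])).countP (fun q : ℚ => decide ((q : ℝ) ≤ x))
      = l.countP (fun q : ℚ => decide ((q : ℝ) ≤ x / (1 - x))) := by
  induction l with
  | nil => simp
  | cons a l ih =>
    have ha : (0 : ℝ) < a := by exact_mod_cast hl a (by simp)
    have h1 : (a : ℝ) / (a + 1) ≤ x ↔ (a : ℝ) ≤ x / (1 - x) := by
      rw [div_le_iff₀ (by positivity), le_div_iff₀ (by linarith)]
      constructor <;> intro h <;> linarith
    have h2 : ¬ ((a : ℝ) + 1 ≤ x) := by linarith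
    have := ih (fun q hq => hl q (by simp [hq]))
    rw [List.flatMap_cons, List.countP_append, this]
    simp only [List.countP_cons, List.countP_nil, decide_eq_true_eq]
    push_cast
    simp only [h1, h2, if_false]
    ring

open scoped Classical in
theorem fcw_eq (n : ℕ) (x : ℝ) :
    Fcw n x = ((CW n).countP (fun q : ℚ => decide ((q : ℝ) ≤ x)) : ℕ) / 2 ^ n := by
  unfold Fcw
  have : (do let a ← CW n; pure (a : ℝ)) = (CW n).map (fun q : ℚ => (q : ℝ)) := by
    simp [List.map_eq_flatMap]
  rw [this, List.countP_map]
  rfl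

theorem fcw_ge (n : ℕ) (x : ℝ) (hx : 1 ≤ x) : Fcw (n + 1) x = (1 + Fcw n (x - 1)) / 2 := by
  rw [fcw_eq, fcw_eq, CW, cw_count_ge x hx _ (cw_pos n), cw_length]
  push_cast
  field_simp
  ring

theorem fcw_lt (n : ℕ) (x : ℝ) (hx : x < 1) : Fcw (n + 1) x = Fcw n (x / (1 - x)) / 2 := by
  rw [fcw_eq, fcw_eq, CW, cw_count_lt x hx _ (cw_pos n)]
  field_simp
  ring

theorem fcw_zero (n : ℕ) : Fcw n 0 = 0 := by
  rw [fcw_eq, List.countP_eq_zero.2]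
  · simp
  · intro q hq
    have : (0 : ℝ) < q := by exact_mod_cast cw_pos n q hq
    simpa using this

section
variable {F : ℝ → ℝ}

theorem lim_zero (hF : ∀ x : ℝ, 0 ≤ x → Tendsto (fun n => Fcw n x) atTop (nhds (F x))) :
    F 0 = 0 := by
  have h := hF 0 le_rfl
  simp only [fcw_zero] at h
  exact tendsto_nhds_unique h tendsto_const_nhds

theorem lim_ge (hF : ∀ x : ℝ, 0 ≤ x → Tendsto (fun n => Fcw n x) atTop (nhds (F x)))
    (x : ℝ) (hx : 1 ≤ x) : F x = (1 + F (x - 1)) / 2 := by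
  have h := (tendsto_add_atTop_iff_nat 1).2 (hF x (by linarith))
  simp only [fcw_ge _ x hx] at h
  exact tendsto_nhds_unique h (((hF (x - 1) (by linarith)).const_add 1).div_const 2)

theorem lim_lt (hF : ∀ x : ℝ, 0 ≤ x → Tendsto (fun n => Fcw n x) atTop (nhds (F x)))
    (x : ℝ) (h0 : 0 ≤ x) (hx : x < 1) : F x = F (x / (1 - x)) / 2 := by
  have h := (tendsto_add_atTop_iff_nat 1).2 (hF x h0)
  simp only [fcw_lt _ x hx] at h
  exact tendsto_nhds_unique h ((hF _ (div_nonneg h0 (by linarith))).div_const 2)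

theorem lim_nat (hF : ∀ x : ℝ, 0 ≤ x → Tendsto (fun n => Fcw n x) atTop (nhds (F x)))
    (n : ℕ) : F n = 1 - (1 / 2) ^ n := by
  induction n with
  | zero => simpa using lim_zero hF
  | succ n ih =>
    rw [lim_ge hF _ (by push_cast; linarith [(Nat.cast_nonneg n : (0 : ℝ) ≤ n)])]
    push_cast
    rw [add_sub_cancel_right, ih, pow_succ]
    ring

variable {μ : Measure ℝ}

theorem mu_Iic_zero (hF : ∀ x : ℝ, 0 ≤ x → Tendsto (fun n => Fcw n x) atTop (nhds (F x)))
    (hprob : IsProbabilityMeasure μ)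
    (hμ : ∀ a b : ℝ, a ≤ b → μ (Set.Ioc a b) = ENNReal.ofReal (F b - F a)) :
    μ (Set.Iic 0) = 0 := by
  have hle : ∀ n : ℕ, μ.real (Set.Iic 0) ≤ (1 / 2) ^ n := by
    intro n
    have h1 : μ.real (Set.Ioc 0 (n : ℝ)) = 1 - (1 / 2) ^ n := by
      rw [Measure.real, hμ 0 n (Nat.cast_nonneg n), lim_zero hF, lim_nat hF, sub_zero,
        ENNReal.toReal_ofReal]
      linarith [pow_le_one₀ (n := n) (by norm_num : (0 : ℝ) ≤ 1 / 2) (by norm_num)]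
    have h2 : μ.real (Set.Iic 0 ∪ Set.Ioc 0 (n : ℝ))
        = μ.real (Set.Iic 0) + μ.real (Set.Ioc 0 (n : ℝ)) := by
      apply measureReal_union _ measurableSet_Ioc
      rw [Set.disjoint_left]
      intro a ha hb
      exact absurd hb.1 (not_lt.2 ha)
    have h3 : μ.real (Set.Iic 0 ∪ Set.Ioc 0 (n : ℝ)) ≤ 1 := measureReal_le_one
    linarith
  have h0 : μ.real (Set.Iic 0) ≤ 0 :=
    ge_of_tendsto' (tendsto_pow_atTop_nhds_zero_of_lt_one (by norm_num) (by norm_num)) hle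
  have := le_antisymm h0 measureReal_nonneg
  rwa [measureReal_eq_zero_iff] at this

theorem mu_real_Iic (hF : ∀ x : ℝ, 0 ≤ x → Tendsto (fun n => Fcw n x) atTop (nhds (F x)))
    (hprob : IsProbabilityMeasure μ)
    (hμ : ∀ a b : ℝ, a ≤ b → μ (Set.Ioc a b) = ENNReal.ofReal (F b - F a))
    (x : ℝ) (hx : 0 ≤ x) : μ.real (Set.Iic x) = F x := by
  have hz := mu_Iic_zero hF hprob hμ
  have hF0 : 0 ≤ F x := by
    apply ge_of_tendsto' (hF x hx)
    intro n
    unfold Fcw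
    positivity
  rw [← Set.Iic_union_Ioc_eq_Iic hx, measureReal_union _ measurableSet_Ioc]
  · rw [Measure.real, hz, Measure.real, hμ 0 x hx, lim_zero hF, sub_zero,
      ENNReal.toReal_ofReal hF0]
    simp
  · rw [Set.disjoint_left]
    intro a ha hb
    exact absurd hb.1 (not_lt.2 ha)

theorem mu_ae_pos (hz : μ (Set.Iic 0) = 0) : ∀ᵐ x ∂μ, 0 < x := by
  rw [ae_iff]
  simpa [Set.Iic] using hz

theorem mu_inv (hF : ∀ x : ℝ, 0 ≤ x → Tendsto (fun n => Fcw n x) atTop (nhds (F x)))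
    (hprob : IsProbabilityMeasure μ)
    (hμ : ∀ a b : ℝ, a ≤ b → μ (Set.Ioc a b) = ENNReal.ofReal (F b - F a)) :
    μ + μ = μ.map (fun x => x + 1) + μ.map (fun x => x / (x + 1)) := by
  have hz := mu_Iic_zero hF hprob hμ
  have hS : Measurable (fun x : ℝ => x + 1) := by fun_prop
  have hT : Measurable (fun x : ℝ => x / (x + 1)) := by fun_prop
  have hpos := mu_ae_pos hz
  have hneg : ∀ x : ℝ, x ≤ 0 → μ.real (Set.Iic x) = 0 := by
    intro x hx
    rw [measureReal_eq_zero_iff]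
    exact measure_mono_null (Set.Iic_subset_Iic.2 hx) hz
  have : IsFiniteMeasure (μ.map (fun x => x + 1)) := Measure.isFiniteMeasure_map μ _
  have : IsFiniteMeasure (μ.map (fun x => x / (x + 1))) := Measure.isFiniteMeasure_map μ _
  apply Measure.ext_of_Iic
  intro x
  rw [← measureReal_eq_measureReal_iff, measureReal_add_apply, measureReal_add_apply,
    map_measureReal_apply hS measurableSet_Iic, map_measureReal_apply hT measurableSet_Iic]
  have e1 : (fun x : ℝ => x + 1) ⁻¹' Set.Iic x = Set.Iic (x - 1) := by
    ext y
    simp [le_sub_iff_add_le]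
  rw [e1]
  rcases lt_or_ge x 0 with h | h
  · have : μ.real ((fun x : ℝ => x / (x + 1)) ⁻¹' Set.Iic x) = 0 := by
      rw [measureReal_eq_zero_iff]
      apply measure_mono_null _ hz
      intro y hy
      by_contra hc
      have hc : 0 < y := by simpa using hc
      have hy : y / (y + 1) ≤ x := hy
      have : 0 < y / (y + 1) := by positivity
      linarith
    rw [this, hneg x h.le, hneg (x - 1) (by linarith)]
  · rcases lt_or_ge x 1 with h1 | h1
    · have : μ.real ((fun x : ℝ => x / (x + 1)) ⁻¹' Set.Iic x) = F (x / (1 - x)) := by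
        rw [← mu_real_Iic hF hprob hμ _ (div_nonneg h (by linarith))]
        apply measureReal_congr
        filter_upwards [hpos] with y hy
        apply propext
        change y / (y + 1) ≤ x ↔ y ≤ x / (1 - x)
        rw [div_le_iff₀ (by positivity), le_div_iff₀ (by linarith)]
        constructor <;> intro h <;> linarith
      rw [this, hneg (x - 1) (by linarith), mu_real_Iic hF hprob hμ x h, lim_lt hF x h h1]
      ring
    · have : μ.real ((fun x : ℝ => x / (x + 1)) ⁻¹' Set.Iic x) = 1 := by
        refine Eq.trans ?_ (probReal_univ (μ := μ))
        apply measureReal_congr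
        filter_upwards [hpos] with y hy
        apply propext
        change y / (y + 1) ≤ x ↔ True
        rw [div_le_iff₀ (by positivity)]
        simp only [iff_true]
        nlinarith
      rw [this, mu_real_Iic hF hprob hμ x h, mu_real_Iic hF hprob hμ (x - 1) (by linarith),
        lim_ge hF x h1]
      ring

theorem mu_integrable (hF : ∀ x : ℝ, 0 ≤ x → Tendsto (fun n => Fcw n x) atTop (nhds (F x)))
    (hprob : IsProbabilityMeasure μ)
    (hμ : ∀ a b : ℝ, a ≤ b → μ (Set.Ioc a b) = ENNReal.ofReal (F b - F a)) (k : ℕ) :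
    Integrable (fun x : ℝ => x ^ k) μ := by
  have hz := mu_Iic_zero hF hprob hμ
  have hpos := mu_ae_pos hz
  have hceil : Measurable (fun x : ℝ => ⌈x⌉₊) := Nat.measurable_ceil
  have hint : Integrable (fun n : ℕ => (n : ℝ) ^ k) (μ.map (fun x : ℝ => ⌈x⌉₊)) := by
    refine ⟨Measurable.aestronglyMeasurable (Measurable.of_discrete), ?_⟩
    rw [hasFiniteIntegral_iff_ofReal (Eventually.of_forall fun n => by positivity),
      lintegral_countable']
    have hhalf : ‖(1 / 2 : ℝ)‖ < 1 := by norm_num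
    have hs : Summable (fun n : ℕ => 2 * ((n : ℝ) ^ k * (1 / 2) ^ n)) :=
      Summable.mul_left 2 (summable_pow_mul_geometric_of_norm_lt_one k hhalf)
    refine lt_of_le_of_lt (ENNReal.tsum_le_tsum
      (g := fun n : ℕ => ENNReal.ofReal (2 * ((n : ℝ) ^ k * (1 / 2) ^ n))) fun n => ?_)
      hs.tsum_ofReal_lt_top
    rw [Measure.map_apply hceil (measurableSet_singleton n)]
    rcases n with _ | n
    · have : (fun x : ℝ => ⌈x⌉₊) ⁻¹' {0} = Set.Iic 0 := Nat.preimage_ceil_zero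
      rw [this, hz]
      simp
    · have : (fun x : ℝ => ⌈x⌉₊) ⁻¹' {n + 1} = Set.Ioc (n : ℝ) ((n + 1 : ℕ) : ℝ) := by
        simpa using Nat.preimage_ceil_of_ne_zero (R := ℝ) (Nat.succ_ne_zero n)
      rw [this, hμ _ _ (by push_cast; linarith), ← ENNReal.ofReal_mul (by positivity)]
      apply ENNReal.ofReal_le_ofReal
      rw [lim_nat hF, lim_nat hF]
      have : (0 : ℝ) ≤ ((n + 1 : ℕ) : ℝ) ^ k * (1 / 2) ^ n := by positivity
      rw [pow_succ (1 / 2 : ℝ) n]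
      linarith
  have h2 := hint.comp_measurable hceil
  refine h2.mono' (by fun_prop) ?_
  filter_upwards [hpos] with y hy
  rw [Real.norm_of_nonneg (by positivity)]
  exact pow_le_pow_left₀ hy.le (Nat.le_ceil y) k

end

/-- Let `F` be the limit distribution function of the Calkin–Wilf tree and `μ`
its Lebesgue–Stieltjes (probability) measure, so that `μ(a,b] = F(b) − F(a)`.
With `M_k = ∫ x^k dμ` and `m_k = ∫ (x/(x+1))^k dμ`, one has the inversion
formula `m_L = M_L − ∑_{s=0}^{L−1} C(L,s)·M_s` for every `L ≥ 1`. -/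
theorem calkin_wilf_m_inversion (F : ℝ → ℝ)
    (hF : ∀ x : ℝ, 0 ≤ x → Tendsto (fun n => Fcw n x) atTop (nhds (F x)))
    (μ : Measure ℝ) (hprob : IsProbabilityMeasure μ)
    (hμ : ∀ a b : ℝ, a ≤ b → μ (Set.Ioc a b) = ENNReal.ofReal (F b - F a))
    (L : ℕ) (hL : 1 ≤ L) :
    ∫ x, (x / (x + 1)) ^ L ∂μ =
      (∫ x, x ^ L ∂μ) -
        ∑ s ∈ Finset.range L, (L.choose s : ℝ) * ∫ x, x ^ s ∂μ := by
  have hz := mu_Iic_zero hF hprob hμ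
  have hpos := mu_ae_pos hz
  have hI := mu_integrable hF hprob hμ
  have hS : Measurable (fun x : ℝ => x + 1) := by fun_prop
  have hT : Measurable (fun x : ℝ => x / (x + 1)) := by fun_prop
  have hbin : (fun x : ℝ => (x + 1) ^ L)
      = fun x => ∑ s ∈ Finset.range (L + 1), (L.choose s : ℝ) * x ^ s := by
    funext x
    rw [add_pow]
    simp [mul_comm]
  have hIS : Integrable (fun x : ℝ => (x + 1) ^ L) μ := by
    rw [hbin]
    exact integrable_finsetSum _ fun s _ => (hI s).const_mul _
  have hIT : Integrable (fun x : ℝ => (x / (x + 1)) ^ L) μ := by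
    refine (hI L).mono' (hT.pow_const L).aestronglyMeasurable ?_
    filter_upwards [hpos] with y hy
    rw [Real.norm_of_nonneg (by positivity)]
    exact pow_le_pow_left₀ (by positivity) (div_le_self hy.le (by linarith)) L
  have hm : AEStronglyMeasurable (fun x : ℝ => x ^ L) (μ.map (fun x => x + 1)) := by fun_prop
  have hm' : AEStronglyMeasurable (fun x : ℝ => x ^ L) (μ.map (fun x => x / (x + 1))) := by
    fun_prop
  have key := congrArg (fun ν : Measure ℝ => ∫ x, x ^ L ∂ν) (mu_inv hF hprob hμ)
  rw [integral_add_measure (hI L) (hI L),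
    integral_add_measure ((integrable_map_measure hm hS.aemeasurable).2 hIS)
      ((integrable_map_measure hm' hT.aemeasurable).2 hIT),
    integral_map hS.aemeasurable hm, integral_map hT.aemeasurable hm', hbin,
    integral_finsetSum _ (fun s _ => (hI s).const_mul _), Finset.sum_range_succ] at key
  simp only [integral_const_mul, Nat.choose_self, Nat.cast_one, one_mul] at key
  linarith
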